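/- On the Robinson–Trautman spacetime, for constants μ₁, μ₂ and the vector field ξ = μ₁ ∂/∂x + μ₂ ∂/∂y, the Lie derivative of the Ricci tensor satisfies L_ξ S = λ_S S + λ_g g, where λ_S = -(μ₂F₁₃ + μ₁F₁₁)/(f(2a - 4br - F₁)) and λ_g = (4b/r)λ_S, with F₁ = f_x² + f_y² - f(f_{xx}+f_{yy}), F₁₃ = -2f_y³ + f_y(4a - 16br - 2f_x² + f(3f_{yy}+f_{xx})) - f(-2f_x f_{xy} + f(f_{yyy}+f_{xxy})), F₁₁ = -2f_x³ + f_x(4a - 16br - 2f_y² + f(f_{yy}+3f_{xx})) - f(-2f_y f_{xy} + f(f_{xxx}+f_{xyy})), assuming F₁ - 2a + 4br ≠ 0. -/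

import Mathlib

open scoped BigOperators

noncomputable section

/-- Points of the coordinate chart `(t,r,x,y)`. -/
abbrev RTPt := Fin 4 → ℝ

/-- Partial derivative in coordinate direction `i`. -/
def RTpd (i : Fin 4) (F : RTPt → ℝ) (p : RTPt) : ℝ :=
  deriv (fun s => F (Function.update p i s)) (p i)

/-- partial derivative of `f(x,y)` in `x`. -/
def pX (f : ℝ → ℝ → ℝ) (x y : ℝ) : ℝ := deriv (fun s => f s y) x

/-- partial derivative of `f(x,y)` in `y`. -/
def pY (f : ℝ → ℝ → ℝ) (x y : ℝ) : ℝ := deriv (fun s => f x s) y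

/-- The Robinson–Trautman metric components. -/
def RTg (a b d : ℝ) (f : ℝ → ℝ → ℝ) (i j : Fin 4) (p : RTPt) : ℝ :=
  if i = 0 ∧ j = 0 then -2 * (a - 2 * b * p 1 - d / p 1)
  else if (i = 0 ∧ j = 1) ∨ (i = 1 ∧ j = 0) then 1
  else if (i = 2 ∧ j = 2) ∨ (i = 3 ∧ j = 3) then -(p 1)^2 / (f (p 2) (p 3))^2
  else 0

/-- The inverse Robinson–Trautman metric components. -/
def RTgInv (a b d : ℝ) (f : ℝ → ℝ → ℝ) (i j : Fin 4) (p : RTPt) : ℝ :=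
  if i = 1 ∧ j = 1 then 2 * (a - 2 * b * p 1 - d / p 1)
  else if (i = 0 ∧ j = 1) ∨ (i = 1 ∧ j = 0) then 1
  else if (i = 2 ∧ j = 2) ∨ (i = 3 ∧ j = 3) then -(f (p 2) (p 3))^2 / (p 1)^2
  else 0

/-- Christoffel symbols `Γ^k_{ij}` of the Levi-Civita connection of the RT metric. -/
def RTGamma (a b d : ℝ) (f : ℝ → ℝ → ℝ) (k i j : Fin 4) (p : RTPt) : ℝ :=
  (1/2) * ∑ l : Fin 4, RTgInv a b d f k l p *
    (RTpd i (RTg a b d f l j) p + RTpd j (RTg a b d f l i) p - RTpd l (RTg a b d f i j) p)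

/-- `(0,4)` Riemann curvature tensor
`R_{pqrs} = g_{pα}(∂_s Γ^α_{qr} - ∂_r Γ^α_{qs} + Γ^β_{qr}Γ^α_{βs} - Γ^β_{qs}Γ^α_{βr})`. -/
def RTRiem (a b d : ℝ) (f : ℝ → ℝ → ℝ) (i j k l : Fin 4) (p : RTPt) : ℝ :=
  ∑ α : Fin 4, RTg a b d f i α p *
    (RTpd l (RTGamma a b d f α j k) p - RTpd k (RTGamma a b d f α j l) p
      + ∑ β : Fin 4, (RTGamma a b d f β j k p * RTGamma a b d f α β l p
          - RTGamma a b d f β j l p * RTGamma a b d f α β k p))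

/-- Ricci tensor `S_{ij} = R^k_{ikj}` of the RT metric. -/
def RTRic (a b d : ℝ) (f : ℝ → ℝ → ℝ) (i j : Fin 4) (p : RTPt) : ℝ :=
  ∑ k : Fin 4, ∑ l : Fin 4, RTgInv a b d f k l p * RTRiem a b d f l i k j p

/-- Scalar curvature of the RT metric. -/
def RTScal (a b d : ℝ) (f : ℝ → ℝ → ℝ) (p : RTPt) : ℝ :=
  ∑ i : Fin 4, ∑ j : Fin 4, RTgInv a b d f i j p * RTRic a b d f i j p

/-- Lie derivative of a `(0,2)` tensor field along a vector field `X`. -/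
def RTlie2 (X : RTPt → Fin 4 → ℝ) (T : Fin 4 → Fin 4 → RTPt → ℝ) (i j : Fin 4) (p : RTPt) : ℝ :=
  (∑ k : Fin 4, X p k * RTpd k (T i j) p)
  + (∑ k : Fin 4, T k j p * RTpd i (fun q => X q k) p)
  + (∑ k : Fin 4, T i k p * RTpd j (fun q => X q k) p)

/-- Lie derivative of a `(0,4)` tensor field along a vector field `X`. -/
def RTlie4 (X : RTPt → Fin 4 → ℝ) (T : Fin 4 → Fin 4 → Fin 4 → Fin 4 → RTPt → ℝ)
    (i j k l : Fin 4) (p : RTPt) : ℝ :=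
  (∑ m : Fin 4, X p m * RTpd m (T i j k l) p)
  + (∑ m : Fin 4, T m j k l p * RTpd i (fun q => X q m) p)
  + (∑ m : Fin 4, T i m k l p * RTpd j (fun q => X q m) p)
  + (∑ m : Fin 4, T i j m l p * RTpd k (fun q => X q m) p)
  + (∑ m : Fin 4, T i j k m p * RTpd l (fun q => X q m) p)

/-- Kulkarni–Nomizu product of two `(0,2)` tensor fields. -/
def RTKN (A B : Fin 4 → Fin 4 → RTPt → ℝ) (i j k l : Fin 4) (p : RTPt) : ℝ :=
  A i l p * B j k p - A i k p * B j l p + A j k p * B i l p - A j l p * B i k p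

/-- `F₁ = f_x² + f_y² - f(f_{xx} + f_{yy})`. -/
def F1 (f : ℝ → ℝ → ℝ) (x y : ℝ) : ℝ :=
  (pX f x y)^2 + (pY f x y)^2 - f x y * (pX (pX f) x y + pY (pY f) x y)

/-- `F₁ᵐ = f_x² + f_y² - f(f_{xx} - f_{yy})`. -/
def F1m (f : ℝ → ℝ → ℝ) (x y : ℝ) : ℝ :=
  (pX f x y)^2 + (pY f x y)^2 - f x y * (pX (pX f) x y - pY (pY f) x y)

/-- `F₁₁` from the paper. -/
def F11 (a b : ℝ) (f : ℝ → ℝ → ℝ) (r x y : ℝ) : ℝ :=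
  -2*(pX f x y)^3
  + pX f x y * (4*a - 16*b*r - 2*(pY f x y)^2 + f x y * (pY (pY f) x y + 3*pX (pX f) x y))
  - f x y * (-2*pY f x y * pY (pX f) x y + f x y * (pX (pX (pX f)) x y + pY (pY (pX f)) x y))

/-- `F₁₃` from the paper. -/
def F13 (a b : ℝ) (f : ℝ → ℝ → ℝ) (r x y : ℝ) : ℝ :=
  -2*(pY f x y)^3
  + pY f x y * (4*a - 16*b*r - 2*(pX f x y)^2 + f x y * (3*pY (pY f) x y + pX (pX f) x y))
  - f x y * (-2*pX f x y * pY (pX f) x y + f x y * (pY (pY (pY f)) x y + pY (pX (pX f)) x y))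

/-! ### Smoothness and symmetry of partial derivatives -/

abbrev Sm2 (f : ℝ → ℝ → ℝ) : Prop := ContDiff ℝ (⊤ : ℕ∞) (Function.uncurry f)

lemma Sm2.hasX {f : ℝ → ℝ → ℝ} (hf : Sm2 f) (x y : ℝ) :
    HasDerivAt (fun s => f s y) (fderiv ℝ (Function.uncurry f) (x, y) (1, 0)) x := by
  have h : HasFDerivAt (Function.uncurry f) (fderiv ℝ (Function.uncurry f) (x, y)) (x, y) :=
    ((hf.differentiable (by simp)) (x, y)).hasFDerivAt
  have h2 : HasDerivAt (fun s : ℝ => (s, y)) ((1 : ℝ), (0 : ℝ)) x :=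
    (hasDerivAt_id x).prodMk (hasDerivAt_const x y)
  exact h.comp_hasDerivAt x h2

lemma Sm2.hasY {f : ℝ → ℝ → ℝ} (hf : Sm2 f) (x y : ℝ) :
    HasDerivAt (fun s => f x s) (fderiv ℝ (Function.uncurry f) (x, y) (0, 1)) y := by
  have h : HasFDerivAt (Function.uncurry f) (fderiv ℝ (Function.uncurry f) (x, y)) (x, y) :=
    ((hf.differentiable (by simp)) (x, y)).hasFDerivAt
  have h2 : HasDerivAt (fun s : ℝ => (x, s)) ((0 : ℝ), (1 : ℝ)) y :=
    (hasDerivAt_const y x).prodMk (hasDerivAt_id y)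
  exact h.comp_hasDerivAt y h2

lemma Sm2.pX_eq {f : ℝ → ℝ → ℝ} (hf : Sm2 f) :
    Function.uncurry (pX f) = fun q => fderiv ℝ (Function.uncurry f) q (1, 0) := by
  funext ⟨x, y⟩; exact (hf.hasX x y).deriv

lemma Sm2.pY_eq {f : ℝ → ℝ → ℝ} (hf : Sm2 f) :
    Function.uncurry (pY f) = fun q => fderiv ℝ (Function.uncurry f) q (0, 1) := by
  funext ⟨x, y⟩; exact (hf.hasY x y).deriv

lemma Sm2.fd {f : ℝ → ℝ → ℝ} (hf : Sm2 f) :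
    ContDiff ℝ (⊤ : ℕ∞) (fderiv ℝ (Function.uncurry f)) :=
  hf.fderiv_right (by simp)

lemma Sm2.pX {f : ℝ → ℝ → ℝ} (hf : Sm2 f) : Sm2 (pX f) := by
  rw [Sm2, hf.pX_eq]; exact hf.fd.clm_apply contDiff_const

lemma Sm2.pY {f : ℝ → ℝ → ℝ} (hf : Sm2 f) : Sm2 (pY f) := by
  rw [Sm2, hf.pY_eq]; exact hf.fd.clm_apply contDiff_const

lemma Sm2.dX {f : ℝ → ℝ → ℝ} (hf : Sm2 f) (x y : ℝ) :
    HasDerivAt (fun s => f s y) (_root_.pX f x y) x :=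
  (hf.hasX x y).differentiableAt.hasDerivAt

lemma Sm2.dY {f : ℝ → ℝ → ℝ} (hf : Sm2 f) (x y : ℝ) :
    HasDerivAt (fun s => f x s) (_root_.pY f x y) y :=
  (hf.hasY x y).differentiableAt.hasDerivAt

lemma Sm2.comm {f : ℝ → ℝ → ℝ} (hf : Sm2 f) :
    _root_.pX (_root_.pY f) = _root_.pY (_root_.pX f) := by
  funext x y
  have hs : IsSymmSndFDerivAt ℝ (Function.uncurry f) (x, y) :=
    (hf.contDiffAt).isSymmSndFDerivAt (by
      simp only [minSmoothness_of_isRCLikeNormedField]; exact WithTop.coe_le_coe.2 le_top)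
  have hd : DifferentiableAt ℝ (fderiv ℝ (Function.uncurry f)) (x, y) :=
    (hf.fd.differentiable (by simp)) _
  have e1 := (hf.pY.hasX x y).deriv
  have e2 := (hf.pX.hasY x y).deriv
  rw [hf.pY_eq] at e1
  rw [hf.pX_eq] at e2
  have k1 : ∀ v w : ℝ × ℝ, fderiv ℝ (fun q => fderiv ℝ (Function.uncurry f) q v) (x, y) w
      = fderiv ℝ (fderiv ℝ (Function.uncurry f)) (x, y) w v := by
    intro v w
    rw [fderiv_clm_apply hd (differentiableAt_const v)]
    simp
  rw [k1] at e1 e2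
  show deriv _ _ = deriv _ _
  rw [e1, e2]
  exact hs _ _

/-! ### Basic functions -/

def E2 (f : ℝ → ℝ → ℝ) (x y : ℝ) : ℝ := 1 / (f x y)^2
def L1 (f : ℝ → ℝ → ℝ) (x y : ℝ) : ℝ := pX f x y / f x y
def L2 (f : ℝ → ℝ → ℝ) (x y : ℝ) : ℝ := pY f x y / f x y

section base
variable {f : ℝ → ℝ → ℝ} (hf : Sm2 f) (hf0 : ∀ x y, f x y ≠ 0)
include hf hf0

lemma pX_E2 (x y : ℝ) : pX (E2 f) x y = -2 * pX f x y / (f x y)^3 := by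
  have h := (hasDerivAt_const x (1:ℝ)).fun_div ((hf.dX x y).fun_pow 2) (pow_ne_zero 2 (hf0 x y))
  refine h.deriv.trans ?_
  have := hf0 x y
  field_simp
  ring

lemma pY_E2 (x y : ℝ) : pY (E2 f) x y = -2 * pY f x y / (f x y)^3 := by
  have h := (hasDerivAt_const y (1:ℝ)).fun_div ((hf.dY x y).fun_pow 2) (pow_ne_zero 2 (hf0 x y))
  refine h.deriv.trans ?_
  have := hf0 x y
  field_simp
  ring

lemma pX_L1 (x y : ℝ) : pX (L1 f) x y =
    (pX (pX f) x y * f x y - pX f x y * pX f x y) / (f x y)^2 :=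
  ((hf.pX.dX x y).fun_div (hf.dX x y) (hf0 x y)).deriv

lemma pY_L1 (x y : ℝ) : pY (L1 f) x y =
    (pY (pX f) x y * f x y - pX f x y * pY f x y) / (f x y)^2 :=
  ((hf.pX.dY x y).fun_div (hf.dY x y) (hf0 x y)).deriv

lemma pX_L2 (x y : ℝ) : pX (L2 f) x y =
    (pY (pX f) x y * f x y - pY f x y * pX f x y) / (f x y)^2 := by
  rw [← hf.comm]
  exact ((hf.pY.dX x y).fun_div (hf.dX x y) (hf0 x y)).deriv

lemma pY_L2 (x y : ℝ) : pY (L2 f) x y =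
    (pY (pY f) x y * f x y - pY f x y * pY f x y) / (f x y)^2 :=
  ((hf.pY.dY x y).fun_div (hf.dY x y) (hf0 x y)).deriv

end base

/-! ### Partial derivatives of product functions -/

lemma RTpd_congr {F G : RTPt → ℝ} (h : ∀ q : RTPt, q 1 ≠ 0 → F q = G q) (i : Fin 4)
    (p : RTPt) (hp : p 1 ≠ 0) : RTpd i F p = RTpd i G p := by
  unfold RTpd
  apply Filter.EventuallyEq.deriv_eq
  have hc : ContinuousAt (fun s => Function.update p i s 1) (p i) := by
    by_cases hi : i = 1
    · subst hi; simp only [Function.update_self]; exact continuousAt_id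
    · have : (fun s => Function.update p i s 1) = fun _ => p 1 := by
        funext s; exact Function.update_of_ne (Ne.symm hi) _ _
      rw [this]; exact continuousAt_const
  have h1 : ∀ᶠ s in nhds (p i), Function.update p i s 1 ≠ 0 := by
    apply hc.eventually_ne
    simpa using hp
  filter_upwards [h1] with s hs
  exact h _ hs

/-- A function of the separated form `c(r) u(x,y)`. -/
def sep (c : ℝ → ℝ) (u : ℝ → ℝ → ℝ) : RTPt → ℝ := fun p => c (p 1) * u (p 2) (p 3)

lemma RTpd_sep0 (c u) (p : RTPt) : RTpd 0 (sep c u) p = 0 := by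
  simp [RTpd, sep, Function.update]
lemma RTpd_sep1 (c u) (p : RTPt) : RTpd 1 (sep c u) p = deriv c (p 1) * u (p 2) (p 3) := by
  simp [RTpd, sep, Function.update]
lemma RTpd_sep2 (c u) (p : RTPt) : RTpd 2 (sep c u) p = c (p 1) * pX u (p 2) (p 3) := by
  simp [RTpd, sep, Function.update, pX]
lemma RTpd_sep3 (c u) (p : RTPt) : RTpd 3 (sep c u) p = c (p 1) * pY u (p 2) (p 3) := by
  simp [RTpd, sep, Function.update, pY]

lemma pX_const (c x y : ℝ) : pX (fun _ _ => c) x y = 0 := by simp [pX]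
lemma pY_const (c x y : ℝ) : pY (fun _ _ => c) x y = 0 := by simp [pY]

def HH (a b d r : ℝ) : ℝ := a - 2 * b * r - d / r
def H1 (b d r : ℝ) : ℝ := -2 * b + d / r^2

lemma hHH (a b d : ℝ) {r : ℝ} (hr : r ≠ 0) : HasDerivAt (HH a b d) (H1 b d r) r := by
  have h := (((hasDerivAt_id r).const_mul (2*b)).const_sub a).fun_sub
    ((hasDerivAt_const r d).fun_div (hasDerivAt_id r) hr)
  refine h.congr_deriv ?_
  simp [H1]; ring

lemma hH1 (b d : ℝ) {r : ℝ} (hr : r ≠ 0) : HasDerivAt (H1 b d) (-2 * d / r^3) r := by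
  have h := ((hasDerivAt_const r d).fun_div ((hasDerivAt_id r).fun_pow 2)
    (pow_ne_zero 2 hr)).const_add (-2*b)
  refine h.congr_deriv ?_
  simp; field_simp

/-- radial parts (eta-expanded names, so that derivatives can be tabulated) -/
def c0 : ℝ → ℝ := fun _ => 0
def c1 : ℝ → ℝ := fun _ => 1
def cm1 : ℝ → ℝ := fun _ => -1
def cr : ℝ → ℝ := fun r => r
def crinv : ℝ → ℝ := fun r => 1 / r
def cmr2 : ℝ → ℝ := fun r => -r^2
def cm2H (a b d : ℝ) : ℝ → ℝ := fun r => -2 * HH a b d r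
def cHH1 (a b d : ℝ) : ℝ → ℝ := fun r => 2 * HH a b d r * H1 b d r
def cmH1 (b d : ℝ) : ℝ → ℝ := fun r => - H1 b d r
def cHr (a b d : ℝ) : ℝ → ℝ := fun r => 2 * HH a b d r * r
def u1 : ℝ → ℝ → ℝ := fun _ _ => 1

lemma pX_u1 (x y : ℝ) : pX u1 x y = 0 := pX_const 1 x y
lemma pY_u1 (x y : ℝ) : pY u1 x y = 0 := pY_const 1 x y

lemma d_c0 (r : ℝ) : deriv c0 r = 0 := deriv_const r 0
lemma d_c1 (r : ℝ) : deriv c1 r = 0 := deriv_const r 1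
lemma d_cm1 (r : ℝ) : deriv cm1 r = 0 := deriv_const r (-1)
lemma d_cr (r : ℝ) : deriv cr r = 1 := (hasDerivAt_id r).deriv
lemma d_cmr2 (r : ℝ) : deriv cmr2 r = -2 * r := by
  refine ((hasDerivAt_id r).fun_pow 2).fun_neg.deriv.trans ?_
  simp
lemma d_crinv (r : ℝ) : deriv crinv r = -1 / r^2 := by
  have : crinv = fun r => r⁻¹ := by funext s; simp [crinv]
  rw [this]; simp [neg_div]
lemma d_cm2H (a b d : ℝ) {r : ℝ} (hr : r ≠ 0) : deriv (cm2H a b d) r = -2 * H1 b d r :=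
  ((hHH a b d hr).const_mul (-2)).deriv
lemma d_cHH1 (a b d : ℝ) {r : ℝ} (hr : r ≠ 0) : deriv (cHH1 a b d) r =
    2 * H1 b d r * H1 b d r + 2 * HH a b d r * (-2 * d / r^3) :=
  (((hHH a b d hr).const_mul 2).fun_mul (hH1 b d hr)).deriv
lemma d_cmH1 (b d : ℝ) {r : ℝ} (hr : r ≠ 0) : deriv (cmH1 b d) r = - (-2 * d / r^3) :=
  (hH1 b d hr).fun_neg.deriv
lemma d_H1 (b d : ℝ) {r : ℝ} (hr : r ≠ 0) : deriv (H1 b d) r = (-2 * d / r^3) :=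
  (hH1 b d hr).deriv
lemma d_cHr (a b d : ℝ) {r : ℝ} (hr : r ≠ 0) : deriv (cHr a b d) r =
    2 * H1 b d r * r + 2 * HH a b d r * 1 :=
  (((hHH a b d hr).const_mul 2).fun_mul (hasDerivAt_id r)).deriv

/-! ### Metric and Christoffel symbols in separated form -/

def gS (a b d : ℝ) (f : ℝ → ℝ → ℝ) (i j : Fin 4) : RTPt → ℝ :=
  if i = 0 ∧ j = 0 then sep (cm2H a b d) u1
  else if (i = 0 ∧ j = 1) ∨ (i = 1 ∧ j = 0) then sep c1 u1
  else if (i = 2 ∧ j = 2) ∨ (i = 3 ∧ j = 3) then sep cmr2 (E2 f)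
  else sep c0 u1

lemma RTg_eq (a b d f i j) : RTg a b d f i j = gS a b d f i j := by
  funext p
  unfold RTg gS
  split_ifs <;> simp [sep, cm2H, HH, u1, c1, cmr2, E2, c0]
  ring

def GS (a b d : ℝ) (f : ℝ → ℝ → ℝ) (k i j : Fin 4) : RTPt → ℝ :=
  if k = 0 then
    if i = 0 ∧ j = 0 then sep (H1 b d) u1
    else if (i = 2 ∧ j = 2) ∨ (i = 3 ∧ j = 3) then sep cr (E2 f)
    else sep c0 u1
  else if k = 1 then
    if i = 0 ∧ j = 0 then sep (cHH1 a b d) u1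
    else if (i = 0 ∧ j = 1) ∨ (i = 1 ∧ j = 0) then sep (cmH1 b d) u1
    else if (i = 2 ∧ j = 2) ∨ (i = 3 ∧ j = 3) then sep (cHr a b d) (E2 f)
    else sep c0 u1
  else if k = 2 then
    if (i = 1 ∧ j = 2) ∨ (i = 2 ∧ j = 1) then sep crinv u1
    else if i = 2 ∧ j = 2 then sep cm1 (L1 f)
    else if (i = 2 ∧ j = 3) ∨ (i = 3 ∧ j = 2) then sep cm1 (L2 f)
    else if i = 3 ∧ j = 3 then sep c1 (L1 f)
    else sep c0 u1
  else
    if (i = 1 ∧ j = 3) ∨ (i = 3 ∧ j = 1) then sep crinv u1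
    else if i = 3 ∧ j = 3 then sep cm1 (L2 f)
    else if (i = 2 ∧ j = 3) ∨ (i = 3 ∧ j = 2) then sep cm1 (L1 f)
    else if i = 2 ∧ j = 2 then sep c1 (L2 f)
    else sep c0 u1

section geom
variable (a b d : ℝ) {f : ℝ → ℝ → ℝ} (hf : Sm2 f) (hf0 : ∀ x y, f x y ≠ 0)
include hf hf0

set_option maxHeartbeats 4000000 in
lemma RTGamma_eq (k i j : Fin 4) (p : RTPt) (hp : p 1 ≠ 0) :
    RTGamma a b d f k i j p = GS a b d f k i j p := by
  have h0 := hf0 (p 2) (p 3)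
  unfold RTGamma
  simp only [RTg_eq, Fin.sum_univ_four]
  fin_cases k <;> fin_cases i <;> fin_cases j <;>
    simp [RTgInv, gS, GS, RTpd_sep0, RTpd_sep1, RTpd_sep2, RTpd_sep3, pX_u1, pY_u1, d_c0, d_c1,
      d_cmr2, d_cm2H a b d hp, pX_E2 hf hf0, pY_E2 hf hf0] <;>
    simp [sep, c0, c1, cm1, cr, crinv, cmr2, cm2H, cHH1, cmH1, cHr, u1, E2, L1, L2, HH] <;>
    field_simp

set_option maxHeartbeats 4000000 in
lemma gInv_g (W : Fin 4 → Fin 4 → ℝ) (p : RTPt) (hp : p 1 ≠ 0) :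
    ∑ k : Fin 4, ∑ l : Fin 4, RTgInv a b d f k l p * ∑ α : Fin 4, RTg a b d f l α p * W k α
      = ∑ k : Fin 4, W k k := by
  have h0 := hf0 (p 2) (p 3)
  simp [Fin.sum_univ_four, RTgInv, RTg]
  field_simp

def SS (a b d : ℝ) (f : ℝ → ℝ → ℝ) (i j : Fin 4) (p : RTPt) : ℝ :=
  if i = 0 ∧ j = 0 then 8 * b * HH a b d (p 1) / p 1
  else if (i = 0 ∧ j = 1) ∨ (i = 1 ∧ j = 0) then -4 * b / p 1
  else if (i = 2 ∧ j = 2) ∨ (i = 3 ∧ j = 3) then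
    (F1 f (p 2) (p 3) - 2 * a + 8 * b * p 1) / (f (p 2) (p 3))^2
  else 0

set_option maxHeartbeats 8000000 in
lemma RTRic_eq (i j : Fin 4) (p : RTPt) (hp : p 1 ≠ 0) :
    RTRic a b d f i j p = SS a b d f i j p := by
  have h0 := hf0 (p 2) (p 3)
  unfold RTRic RTRiem
  rw [gInv_g a b d hf hf0 (fun k α => RTpd j (RTGamma a b d f α i k) p
      - RTpd k (RTGamma a b d f α i j) p
      + ∑ β : Fin 4, (RTGamma a b d f β i k p * RTGamma a b d f α β j p
          - RTGamma a b d f β i j p * RTGamma a b d f α β k p)) p hp]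
  have e : ∀ m k i j, RTpd m (RTGamma a b d f k i j) p = RTpd m (GS a b d f k i j) p :=
    fun m k i j => RTpd_congr (fun q hq => RTGamma_eq a b d hf hf0 k i j q hq) m p hp
  simp only [e, RTGamma_eq a b d hf hf0 _ _ _ p hp, Fin.sum_univ_four]
  fin_cases i <;> fin_cases j <;>
    simp [GS, RTpd_sep0, RTpd_sep1, RTpd_sep2, RTpd_sep3, pX_u1, pY_u1, d_c0, d_c1, d_cm1, d_cr,
      d_crinv, d_cHH1 a b d hp, d_cmH1 b d hp, d_cHr a b d hp, d_H1 b d hp,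
      pX_E2 hf hf0, pY_E2 hf hf0, pX_L1 hf hf0, pY_L1 hf hf0, pX_L2 hf hf0, pY_L2 hf hf0] <;>
    simp [sep, SS, c0, c1, cm1, cr, crinv, cmr2, cm2H, cHH1, cmH1, cHr, u1, E2, L1, L2, HH, H1,
      F1] <;>
    field_simp <;> try ring

def Q (a b : ℝ) (f : ℝ → ℝ → ℝ) (r x y : ℝ) : ℝ :=
  (F1 f x y - 2 * a + 8 * b * r) / (f x y)^2

lemma pX_Q (r x y : ℝ) : pX (Q a b f r) x y = F11 a b f r x y / (f x y)^3 := by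
  have h0 := hf0 x y
  have hF := (((hf.pX.dX x y).fun_pow 2).fun_add ((hf.pY.dX x y).fun_pow 2)).fun_sub
    ((hf.dX x y).fun_mul ((hf.pX.pX.dX x y).fun_add (hf.pY.pY.dX x y)))
  have h := ((hF.sub_const (2 * a)).add_const (8 * b * r)).fun_div ((hf.dX x y).fun_pow 2)
    (pow_ne_zero 2 h0)
  refine h.deriv.trans ?_
  rw [hf.pY.comm, hf.comm]
  simp only [F11]
  field_simp
  push_cast
  ring

lemma pY_Q (r x y : ℝ) : pY (Q a b f r) x y = F13 a b f r x y / (f x y)^3 := by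
  have h0 := hf0 x y
  have hF := (((hf.pX.dY x y).fun_pow 2).fun_add ((hf.pY.dY x y).fun_pow 2)).fun_sub
    ((hf.dY x y).fun_mul ((hf.pX.pX.dY x y).fun_add (hf.pY.pY.dY x y)))
  have h := ((hF.sub_const (2 * a)).add_const (8 * b * r)).fun_div ((hf.dY x y).fun_pow 2)
    (pow_ne_zero 2 h0)
  refine h.deriv.trans ?_
  simp only [F13]
  field_simp
  push_cast
  ring

lemma RTpd2_Ric (i j : Fin 4) (p : RTPt) (hp : p 1 ≠ 0) :
    RTpd 2 (RTRic a b d f i j) p = if (i = 2 ∧ j = 2) ∨ (i = 3 ∧ j = 3) then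
      F11 a b f (p 1) (p 2) (p 3) / (f (p 2) (p 3))^3 else 0 := by
  rw [RTpd_congr (fun q hq => RTRic_eq a b d hf hf0 i j q hq) 2 p hp, ← pX_Q a b hf hf0]
  fin_cases i <;> fin_cases j <;> simp [RTpd, SS, Function.update, pX, Q]

lemma RTpd3_Ric (i j : Fin 4) (p : RTPt) (hp : p 1 ≠ 0) :
    RTpd 3 (RTRic a b d f i j) p = if (i = 2 ∧ j = 2) ∨ (i = 3 ∧ j = 3) then
      F13 a b f (p 1) (p 2) (p 3) / (f (p 2) (p 3))^3 else 0 := by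
  rw [RTpd_congr (fun q hq => RTRic_eq a b d hf hf0 i j q hq) 3 p hp, ← pY_Q a b hf hf0]
  fin_cases i <;> fin_cases j <;> simp [RTpd, SS, Function.update, pY, Q]

end geom

/-- generalized Ricci inheritance along `ξ = μ₁ ∂/∂x + μ₂ ∂/∂y`. -/
theorem RT_generalized_Ricci_inheritance (a b d : ℝ) (f : ℝ → ℝ → ℝ)
    (hf : ContDiff ℝ (⊤ : ℕ∞) (Function.uncurry f)) (hf0 : ∀ x y, f x y ≠ 0)
    (μ₁ μ₂ : ℝ) :
    ∀ p : RTPt, p 1 ≠ 0 →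
      F1 f (p 2) (p 3) - 2*a + 4*b*p 1 ≠ 0 → ∀ i j : Fin 4,
      RTlie2 (fun _ k => if k = 2 then μ₁ else if k = 3 then μ₂ else 0)
          (RTRic a b d f) i j p =
        (-(μ₂ * F13 a b f (p 1) (p 2) (p 3) + μ₁ * F11 a b f (p 1) (p 2) (p 3))
            / (f (p 2) (p 3) * (2*a - 4*b*p 1 - F1 f (p 2) (p 3))))
          * RTRic a b d f i j p
        + (4*b/(p 1)) *
          (-(μ₂ * F13 a b f (p 1) (p 2) (p 3) + μ₁ * F11 a b f (p 1) (p 2) (p 3))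
            / (f (p 2) (p 3) * (2*a - 4*b*p 1 - F1 f (p 2) (p 3))))
          * RTg a b d f i j p := by
  intro p hp hF i j
  have h0 := hf0 (p 2) (p 3)
  have hD : 2*a - 4*b*p 1 - F1 f (p 2) (p 3) ≠ 0 := by
    intro h; apply hF; linarith
  have hl : RTlie2 (fun _ k => if k = 2 then μ₁ else if k = 3 then μ₂ else 0)
      (RTRic a b d f) i j p =
      μ₁ * RTpd 2 (RTRic a b d f i j) p + μ₂ * RTpd 3 (RTRic a b d f i j) p := by
    have hc : ∀ (m : Fin 4) (c : ℝ), RTpd m (fun _ => c) p = 0 := fun m c => by simp [RTpd]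
    simp only [RTlie2, hc, mul_zero, Finset.sum_const_zero, add_zero]
    simp [Fin.sum_univ_four]
  rw [hl, RTpd2_Ric a b d hf hf0 i j p hp, RTpd3_Ric a b d hf hf0 i j p hp,
    RTRic_eq a b d hf hf0 i j p hp]
  generalize F11 a b f (p 1) (p 2) (p 3) = A at *
  generalize F13 a b f (p 1) (p 2) (p 3) = B at *
  simp only [SS]
  generalize F1 f (p 2) (p 3) = C at *
  fin_cases i <;> fin_cases j <;> simp [RTg, HH] <;> field_simp <;> ring
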